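/- arXiv:1901.04922 — 3 statements merged into one kernel-verified Lean document; each statement's English description precedes it below -/
import Mathlib

section
/- Assume that the partial quotients satisfy |a_n^{(i)}|_∞ < p/2 for all n ≥ 0 and i = 1,…,m. Then for every i = 1,…,m and every n ≥ 0, the convergent numerator satisfies |A_n^{(i)}|_∞ < p^{n+1}/2. -/
open Finset Filter

/-- `q` belongs to `ℤ[1/p]`. -/
def InZInvP (p : ℕ) (q : ℚ) : Prop := ∃ (z : ℤ) (k : ℕ), q = (z : ℚ) / (p : ℚ) ^ k

/-- `A : ℤ → ℕ → ℚ` is the family of convergent numerators/denominators attached to the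
partial quotients `a`. -/
def JPConv (m : ℕ) (a : ℕ → ℕ → ℚ) (A : ℤ → ℕ → ℚ) : Prop :=
  (∀ i ∈ Finset.Icc 1 (m + 1), ∀ j ∈ Finset.Icc 1 (m + 1),
      A (-(j : ℤ)) i = if i = j then 1 else 0) ∧
  (∀ n : ℕ, ∀ i ∈ Finset.Icc 1 (m + 1),
      A n i = (∑ j ∈ Finset.Icc 1 m, a n j * A ((n : ℤ) - j) i) + A ((n : ℤ) - m - 1) i)

/-- If the partial quotients (elements of `ℤ[1/p]`) satisfy
`|aₙ⁽ⁱ⁾|_∞ < p/2` for all `n ≥ 0` and `i = 1,…,m`, then `|Aₙ⁽ⁱ⁾|_∞ < p^{n+1}/2` for every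
`i = 1,…,m` and every `n ≥ 0`. -/
theorem jacobiPerron_convergent_archimedean_bound (p m : ℕ) (hp : p.Prime)
    (hp2 : 2 < p) (hm : 1 ≤ m)
    (a : ℕ → ℕ → ℚ) (A : ℤ → ℕ → ℚ) (hconv : JPConv m a A)
    (ha : ∀ n : ℕ, ∀ i ∈ Finset.Icc 1 m, InZInvP p (a n i) ∧ |a n i| < (p : ℚ) / 2) :
    ∀ i ∈ Finset.Icc 1 m, ∀ n : ℕ, |A n i| < (p : ℚ) ^ (n + 1) / 2 := by
  obtain ⟨h0, hr⟩ := hconv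
  intro i hi
  have hi' := Finset.mem_Icc.mp hi
  have him : i ∈ Finset.Icc 1 (m + 1) := Finset.mem_Icc.mpr ⟨hi'.1, by omega⟩
  have hp3 : (3 : ℚ) ≤ p := by exact_mod_cast hp2
  -- key inequality
  have hneg : ∀ n j : ℕ, j ∈ Finset.Icc 1 (m + 1) → n < j →
      A ((n : ℤ) - j) i = if j = n + i then 1 else 0 := by
    intro n j hj hnj
    have hj' := Finset.mem_Icc.mp hj
    have h := h0 i him (j - n) (Finset.mem_Icc.mpr ⟨by omega, by omega⟩)
    have e : (-((j - n : ℕ) : ℤ)) = (n : ℤ) - j := by omega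
    rw [e] at h
    rw [h]
    by_cases c : i = j - n
    · rw [if_pos c, if_pos (by omega)]
    · rw [if_neg c, if_neg (by omega)]
  have hsum : ∀ n : ℕ, ∑ j ∈ Finset.Icc 1 (m + 1), |A ((n : ℤ) - j) i|
      ≤ ∑ k ∈ Finset.range n, |A k i| + 1 := by
    intro n
    have h1 : ∑ j ∈ Finset.Icc 1 (m + 1), |A ((n : ℤ) - j) i|
        ≤ ∑ j ∈ Finset.Icc 1 (m + 1), ((if j ≤ n then |A ((n : ℤ) - j) i| else 0)
          + (if j = n + i then 1 else 0)) := by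
      apply Finset.sum_le_sum
      intro j hj
      by_cases c : j ≤ n
      · rw [if_pos c]
        have : (0 : ℚ) ≤ if j = n + i then 1 else 0 := by split_ifs <;> norm_num
        linarith
      · rw [if_neg c, hneg n j hj (by omega)]
        split_ifs <;> simp
    refine h1.trans ?_
    rw [Finset.sum_add_distrib]
    apply add_le_add
    · rw [← Finset.sum_filter]
      have h2 : ∑ k ∈ Finset.range n, |A k i| = ∑ j ∈ Finset.Icc 1 n, |A ((n : ℤ) - j) i| := by
        apply Finset.sum_bij' (fun k _ => n - k) (fun j _ => n - j)
        · intro k hk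
          simp only [Finset.mem_range, Finset.mem_Icc] at *
          omega
        · intro k hk
          simp only [Finset.mem_range, Finset.mem_Icc] at *
          omega
        · intro k hk
          simp only [Finset.mem_range] at *
          omega
        · intro k hk
          simp only [Finset.mem_Icc] at *
          omega
        · intro k hk
          simp only [Finset.mem_range] at hk
          have e : (n : ℤ) - ((n - k : ℕ) : ℤ) = k := by omega
          rw [e]
      rw [h2]
      apply Finset.sum_le_sum_of_subset_of_nonneg
      · intro j hj
        simp only [Finset.mem_filter, Finset.mem_Icc] at *
        omega
      · intros
        exact abs_nonneg _
    · rw [Finset.sum_ite_eq']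
      split_ifs <;> norm_num
  have hkey : ∀ n : ℕ, |A n i| ≤ (p : ℚ) / 2 * (∑ k ∈ Finset.range n, |A k i| + 1) := by
    intro n
    refine le_trans ?_ (mul_le_mul_of_nonneg_left (hsum n) (by linarith))
    rw [hr n i him, Finset.sum_Icc_succ_top (by omega), mul_add, Finset.mul_sum]
    refine (abs_add_le _ _).trans (add_le_add ?_ ?_)
    · refine (Finset.abs_sum_le_sum_abs _ _).trans (Finset.sum_le_sum ?_)
      intro j hj
      rw [abs_mul]
      exact mul_le_mul_of_nonneg_right (ha n j hj).2.le (abs_nonneg _)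
    · have e : (n : ℤ) - m - 1 = (n : ℤ) - ((m + 1 : ℕ) : ℤ) := by push_cast; ring
      rw [e]
      nlinarith [abs_nonneg (A ((n : ℤ) - ((m + 1 : ℕ) : ℤ)) i)]
  have hT : ∀ n : ℕ, ∑ k ∈ Finset.range n, |A k i| ≤ 3 / 4 * ((p : ℚ) ^ n - 1) := by
    intro n
    induction n with
    | zero => simp
    | succ n ih =>
      rw [Finset.sum_range_succ]
      have hk := hkey n
      have h1 : (1 : ℚ) ≤ (p : ℚ) ^ n := one_le_pow₀ (by linarith)
      have h2 := mul_le_mul_of_nonneg_left ih (show (0 : ℚ) ≤ p / 2 by linarith)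
      have h3 := mul_nonneg (sub_nonneg.mpr h1) (show (0 : ℚ) ≤ 3 * p / 8 - 3 / 4 by linarith)
      rw [pow_succ]
      linarith
  intro n
  rcases Nat.eq_zero_or_pos n with rfl | hn
  · have e : A ((0 : ℕ) : ℤ) i = a 0 i := by
      have hl := hneg 0 (m + 1) (Finset.mem_Icc.mpr ⟨by omega, le_rfl⟩) (by omega)
      rw [if_neg (by omega)] at hl
      have e : ((0 : ℕ) : ℤ) - m - 1 = ((0 : ℕ) : ℤ) - ((m + 1 : ℕ) : ℤ) := by push_cast; ring
      rw [hr 0 i him, e, hl, add_zero, Finset.sum_eq_single i]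
      · rw [hneg 0 i him (by omega), if_pos (by omega), mul_one]
      · intro j hj hji
        have hj' := Finset.mem_Icc.mp hj
        rw [hneg 0 j (Finset.mem_Icc.mpr ⟨hj'.1, by omega⟩) (by omega), if_neg (by omega), mul_zero]
      · intro h
        exact absurd hi h
    rw [e]
    simpa using (ha 0 i hi).2
  · have h1 : (1 : ℚ) < (p : ℚ) ^ n := one_lt_pow₀ (by linarith) (by omega)
    have h2 := mul_le_mul_of_nonneg_left (hT n) (show (0 : ℚ) ≤ p / 2 by linarith)
    have h3 := mul_pos (sub_pos.mpr h1) (show (0 : ℚ) < p by linarith)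
    have hk := hkey n
    rw [pow_succ]
    linarith
end

section
/- Assume that the partial quotients satisfy |a_n^{(1)}|_p > 1 and |a_n^{(i)}|_p < |a_n^{(1)}|_p for i = 2,…,m and all n ≥ 1. Then for every n ≥ 1, the denominator of the n-th convergent satisfies |A_n^{(m+1)}|_p = Π_{h=1}^{n} |a_h^{(1)}|_p. -/
open Finset Filter

/-- If the partial quotients satisfy `|aₙ⁽¹⁾|_p > 1` and
`|aₙ⁽ⁱ⁾|_p < |aₙ⁽¹⁾|_p` for `i = 2,…,m` and all `n ≥ 1`, then for every `n ≥ 1` one has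
`|Aₙ⁽ᵐ⁺¹⁾|_p = Π_{h=1}^{n} |a_h⁽¹⁾|_p`. -/
theorem jacobiPerron_denominator_padic_norm (p m : ℕ) (hp : p.Prime)
    (hp2 : 2 < p) (hm : 1 ≤ m)
    (a : ℕ → ℕ → ℚ) (A : ℤ → ℕ → ℚ) (hconv : JPConv m a A)
    (ha1 : ∀ n : ℕ, 1 ≤ n → 1 < padicNorm p (a n 1))
    (ha2 : ∀ n : ℕ, 1 ≤ n → ∀ i ∈ Finset.Icc 2 m, padicNorm p (a n i) < padicNorm p (a n 1)) :
    ∀ n : ℕ, 1 ≤ n →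
      padicNorm p (A n (m + 1)) = ∏ h ∈ Finset.Icc 1 n, padicNorm p (a h 1) := by
  haveI : Fact p.Prime := ⟨hp⟩
  obtain ⟨h0, hrec⟩ := hconv
  have hmem : m + 1 ∈ Finset.Icc 1 (m + 1) := by simp
  have hneg : ∀ j : ℕ, 1 ≤ j → j ≤ m → A (-(j : ℤ)) (m + 1) = 0 := by
    intro j h1 h2
    rw [h0 (m + 1) hmem j (by simp; omega), if_neg (by omega)]
  have hA0 : A ((0 : ℕ) : ℤ) (m + 1) = 1 := by
    rw [hrec 0 (m + 1) hmem, Finset.sum_eq_zero]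
    · have h := h0 (m + 1) hmem (m + 1) hmem
      rw [if_pos rfl] at h
      rw [zero_add, ← h]
      congr 1
      push_cast
      ring
    · intro j hj
      rw [Finset.mem_Icc] at hj
      have h := hneg j hj.1 hj.2
      have e : (((0 : ℕ) : ℤ) - j) = -(j : ℤ) := by simp
      rw [e, h, mul_zero]
  have key : ∀ n : ℕ,
      padicNorm p (A n (m + 1)) = ∏ h ∈ Finset.Icc 1 n, padicNorm p (a h 1) ∧
      0 < padicNorm p (A n (m + 1)) ∧
      ∀ k : ℤ, -(m : ℤ) ≤ k → k ≤ n →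
        padicNorm p (A k (m + 1)) ≤ padicNorm p (A n (m + 1)) := by
    intro n
    induction n with
    | zero =>
      refine ⟨by rw [hA0]; simp, by rw [hA0]; simp, ?_⟩
      intro k hk1 hk2
      rcases eq_or_lt_of_le hk2 with h | h
      · rw [h]
      · obtain ⟨j, hj⟩ : ∃ j : ℕ, k = -(j : ℤ) := ⟨k.natAbs, by omega⟩
        rw [hj, hneg j (by omega) (by omega), hA0]
        simp
    | succ n ih =>
      obtain ⟨ih1, ih2, ih3⟩ := ih
      have hgt := ha1 (n + 1) (by omega)
      have hpos : 0 < padicNorm p (a (n + 1) 1) * padicNorm p (A n (m + 1)) := by positivity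
      have hsplit : Finset.Icc 1 m = insert 1 (Finset.Icc 2 m) := by
        ext x; simp only [Finset.mem_Icc, Finset.mem_insert]; omega
      have hr := hrec (n + 1) (m + 1) hmem
      have e1 : (((n + 1 : ℕ) : ℤ) - ((1 : ℕ) : ℤ)) = (n : ℤ) := by push_cast; ring
      rw [hsplit, Finset.sum_insert (by simp), e1, add_assoc] at hr
      have hsum : padicNorm p (∑ j ∈ Finset.Icc 2 m,
          a (n + 1) j * A (((n + 1 : ℕ) : ℤ) - j) (m + 1)) <
          padicNorm p (a (n + 1) 1) * padicNorm p (A n (m + 1)) := by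
        apply padicNorm.sum_lt' _ hpos
        intro j hj
        have hlt := ha2 (n + 1) (by omega) j hj
        rw [Finset.mem_Icc] at hj
        rw [padicNorm.mul]
        exact mul_lt_mul_of_lt_of_le_of_nonneg_of_pos hlt
          (ih3 _ (by push_cast; omega) (by push_cast; omega)) (padicNorm.nonneg _) ih2
      have hlast : padicNorm p (A (((n + 1 : ℕ) : ℤ) - m - 1) (m + 1)) <
          padicNorm p (a (n + 1) 1) * padicNorm p (A n (m + 1)) :=
        lt_of_le_of_lt (ih3 _ (by push_cast; omega) (by push_cast; omega))
          (lt_mul_of_one_lt_left ih2 hgt)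
      have hrest := lt_of_le_of_lt (padicNorm.nonarchimedean (p := p)) (max_lt hsum hlast)
      have hA : padicNorm p (A ((n + 1 : ℕ) : ℤ) (m + 1)) =
          padicNorm p (a (n + 1) 1) * padicNorm p (A n (m + 1)) := by
        rw [← padicNorm.mul] at hrest
        rw [hr, padicNorm.add_eq_max_of_ne hrest.ne', max_eq_left hrest.le, padicNorm.mul]
      refine ⟨?_, by rw [hA]; exact hpos, ?_⟩
      · rw [hA, ih1, Finset.prod_Icc_succ_top (by omega), mul_comm]
      · intro k hk1 hk2
        rcases eq_or_lt_of_le hk2 with h | h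
        · rw [h]
        · rw [hA]
          exact (ih3 k hk1 (by push_cast at h; omega)).trans (lt_mul_of_one_lt_left ih2 hgt).le
  intro n _
  exact (key n).1
end

section
/- For an infinite run of the p-adic Jacobi–Perron algorithm, define V_n^{(i)} = A_n^{(i)} − α_0^{(i)} A_n^{(m+1)} ∈ ℚ_p for n ≥ −m and i = 1,…,m. Then for each i = 1,…,m, lim_{n→+∞} |V_n^{(i)}|_p = 0. -/
open Finset Filter

/-- `a` is the Browkin `s`-function value of `x`:
`a ∈ ℤ[1/p]`, `|a|_∞ < p/2` and `|x - a|_p < 1`. -/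
def IsSValue (p : ℕ) [Fact p.Prime] (x : ℚ_[p]) (a : ℚ) : Prop :=
  InZInvP p a ∧ |a| < (p : ℚ) / 2 ∧ ‖x - (a : ℚ_[p])‖ < 1

/-- An infinite run of the `p`-adic Jacobi–Perron algorithm with complete quotients
`α n i` and partial quotients `a n i` (`n ≥ 0`, `i = 1,…,m`). -/
def JPRun (p : ℕ) [Fact p.Prime] (m : ℕ) (α : ℕ → ℕ → ℚ_[p]) (a : ℕ → ℕ → ℚ) : Prop :=
  ∀ n : ℕ,
    (∀ i ∈ Finset.Icc 1 m, IsSValue p (α n i) (a n i)) ∧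
    α n m ≠ ((a n m : ℚ) : ℚ_[p]) ∧
    α (n + 1) 1 = (α n m - ((a n m : ℚ) : ℚ_[p]))⁻¹ ∧
    ∀ i ∈ Finset.Icc 2 m,
      α (n + 1) i = (α n (i - 1) - ((a n (i - 1) : ℚ) : ℚ_[p])) / (α n m - ((a n m : ℚ) : ℚ_[p]))

theorem jp_norm_le {p : ℕ} [Fact p.Prime] {x : ℚ_[p]} (h : ‖x‖ < 1) : ‖x‖ ≤ (p : ℝ)⁻¹ := by
  have := (Padic.norm_le_pow_iff_norm_lt_pow_add_one x (-1)).2 (by simpa using h)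
  simpa using this

theorem jp_identity {p m : ℕ} [Fact p.Prime] (hm : 1 ≤ m)
    (α : ℕ → ℕ → ℚ_[p]) (a : ℕ → ℕ → ℚ) (hrun : JPRun p m α a) (W : ℤ → ℚ_[p])
    (h0 : (∑ j ∈ Finset.Icc 1 m, α 0 j * W (0 - (j : ℤ))) + W (0 - m - 1) = 0)
    (hrec : ∀ n : ℕ, W n =
      (∑ j ∈ Finset.Icc 1 m, (a n j : ℚ_[p]) * W ((n : ℤ) - j)) + W ((n : ℤ) - m - 1))
    (n : ℕ) :
    (∑ j ∈ Finset.Icc 1 m, α n j * W ((n : ℤ) - (j : ℤ))) + W ((n : ℤ) - m - 1) = 0 := by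
  induction n with
  | zero => simpa using h0
  | succ n ih =>
    obtain ⟨-, hne, h1, h2⟩ := hrun n
    have hd : α n m - (a n m : ℚ_[p]) ≠ 0 := sub_ne_zero.2 hne
    have key : W n + ∑ j ∈ Finset.Icc 1 m, (α n j - (a n j : ℚ_[p])) * W ((n : ℤ) - j) = 0 := by
      rw [hrec n]
      simp only [sub_mul, Finset.sum_sub_distrib]
      linear_combination ih
    obtain ⟨k, rfl⟩ : ∃ k, m = k + 1 := ⟨m - 1, by omega⟩
    have e1 : ∀ f : ℕ → ℚ_[p], ∑ j ∈ Finset.Icc 1 (k + 1), f j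
        = ∑ j ∈ Finset.range (k + 1), f (j + 1) := by
      intro f
      rw [Finset.range_eq_Ico, Finset.sum_Ico_add' f 0 (k + 1) 1]
      rfl
    rw [e1] at key ⊢
    rw [Finset.sum_range_succ] at key
    rw [Finset.sum_range_succ']
    have e2 : ∑ j ∈ Finset.range k, α (n + 1) (j + 1 + 1) * W (((n + 1 : ℕ) : ℤ) - ((j + 1 + 1 : ℕ) : ℤ))
        = (α n (k + 1) - (a n (k + 1) : ℚ_[p]))⁻¹ * ∑ j ∈ Finset.range k,
          (α n (j + 1) - (a n (j + 1) : ℚ_[p])) * W ((n : ℤ) - ((j + 1 : ℕ) : ℤ)) := by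
      rw [Finset.mul_sum]
      refine Finset.sum_congr rfl fun j hj => ?_
      rw [Finset.mem_range] at hj
      rw [h2 (j + 1 + 1) (Finset.mem_Icc.2 ⟨by omega, by omega⟩)]
      have : ((n + 1 : ℕ) : ℤ) - ((j + 1 + 1 : ℕ) : ℤ) = (n : ℤ) - ((j + 1 : ℕ) : ℤ) := by
        push_cast; ring
      rw [this]
      simp only [Nat.add_sub_cancel]
      ring
    rw [e2]
    have e3 : ((n + 1 : ℕ) : ℤ) - ((0 + 1 : ℕ) : ℤ) = n := by push_cast; ring
    have e4 : ((n + 1 : ℕ) : ℤ) - ((k + 1 : ℕ) : ℤ) - 1 = (n : ℤ) - ((k + 1 : ℕ) : ℤ) := by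
      push_cast; ring
    rw [e3, e4, zero_add, h1]
    have e5 := congrArg (fun x => (α n (k + 1) - (a n (k + 1) : ℚ_[p]))⁻¹ * x) key
    simp only [mul_add, mul_zero, ← mul_assoc, inv_mul_cancel₀ hd, one_mul] at e5
    linear_combination e5

theorem jp_bound {p m : ℕ} [Fact p.Prime] (W : ℤ → ℚ_[p]) (c : ℕ → ℕ → ℚ_[p])
    (hc : ∀ n : ℕ, ∀ j ∈ Finset.Icc 1 m, ‖c n j‖ ≤ (p : ℝ)⁻¹)
    (hW : ∀ n : ℕ, W n = ∑ j ∈ Finset.Icc 1 m, c n j * W ((n : ℤ) - j))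
    (hini : ∀ j ∈ Finset.Icc 1 m, ‖W (-(j : ℤ))‖ ≤ 1) (k : ℕ) :
    ∀ n : ℤ, (k : ℤ) * m - m ≤ n → ‖W n‖ ≤ ((p : ℝ)⁻¹) ^ k := by
  have hp1 : (p : ℝ)⁻¹ ≤ 1 := inv_le_one_of_one_le₀ (by
    exact_mod_cast (Fact.out : p.Prime).one_lt.le)
  have hp0 : 0 ≤ (p : ℝ)⁻¹ := by positivity
  have step : ∀ (n : ℕ) (B : ℝ), 0 ≤ B → (∀ j ∈ Finset.Icc 1 m, ‖W ((n : ℤ) - j)‖ ≤ B) →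
      ‖W n‖ ≤ (p : ℝ)⁻¹ * B := by
    intro n B hB h
    rw [hW n]
    refine IsUltrametricDist.norm_sum_le_of_forall_le_of_nonneg (by positivity) fun j hj => ?_
    rw [norm_mul]
    exact mul_le_mul (hc n j hj) (h j hj) (norm_nonneg _) hp0
  induction k with
  | zero =>
    have : ∀ N : ℕ, ∀ n : ℤ, -(m : ℤ) ≤ n → n < N → ‖W n‖ ≤ 1 := by
      intro N
      induction N with
      | zero =>
        intro n h1 h2
        have := hini (-n).toNat (Finset.mem_Icc.2 ⟨by omega, by omega⟩)
        have e : -(((-n).toNat : ℕ) : ℤ) = n := by omega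
        rwa [e] at this
      | succ N ih =>
        intro n h1 h2
        by_cases h : n < N
        · exact ih n h1 h
        · have e : n = (N : ℤ) := by push_cast at h2; omega
          rw [e]
          refine (step N 1 zero_le_one fun j hj => ?_).trans (by simpa using hp1)
          rw [Finset.mem_Icc] at hj
          exact ih _ (by omega) (by omega)
    intro n hn
    simpa using this (n + 1).toNat n (by simpa using hn) (by omega)
  | succ k ih =>
    intro n hn
    have hn' : (k : ℤ) * m ≤ n := by push_cast at hn; linarith
    have hn0 : 0 ≤ n := le_trans (by positivity) hn'
    lift n to ℕ using hn0
    rw [pow_succ']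
    refine step n _ (by positivity) fun j hj => ih _ ?_
    rw [Finset.mem_Icc] at hj
    have : (j : ℤ) ≤ m := by exact_mod_cast hj.2
    linarith

/-- For an infinite run of the `p`-adic Jacobi–Perron algorithm, with
`Vₙ⁽ⁱ⁾ = Aₙ⁽ⁱ⁾ - α₀⁽ⁱ⁾ Aₙ⁽ᵐ⁺¹⁾ ∈ ℚ_p`, one has `lim_{n→∞} |Vₙ⁽ⁱ⁾|_p = 0` for each
`i = 1,…,m`. -/
theorem jacobiPerron_V_tendsto_zero (p m : ℕ) [hp : Fact p.Prime]
    (hp2 : 2 < p) (hm : 1 ≤ m)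
    (α : ℕ → ℕ → ℚ_[p]) (a : ℕ → ℕ → ℚ) (A : ℤ → ℕ → ℚ)
    (hrun : JPRun p m α a) (hconv : JPConv m a A)
    (V : ℤ → ℕ → ℚ_[p])
    (hV : ∀ n : ℤ, -(m : ℤ) ≤ n → ∀ i ∈ Finset.Icc 1 m,
      V n i = ((A n i : ℚ) : ℚ_[p]) - α 0 i * ((A n (m + 1) : ℚ) : ℚ_[p])) :
    ∀ i ∈ Finset.Icc 1 m,
      Filter.Tendsto (fun n : ℕ => ‖V n i‖) Filter.atTop (nhds 0) := by
  intro i hi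
  have hi' := Finset.mem_Icc.1 hi
  obtain ⟨hA0, hA⟩ := hconv
  have him : i ∈ Finset.Icc 1 (m + 1) := Finset.mem_Icc.2 ⟨hi'.1, by omega⟩
  have hmm : m + 1 ∈ Finset.Icc 1 (m + 1) := Finset.mem_Icc.2 ⟨by omega, le_rfl⟩
  set W : ℤ → ℚ_[p] := fun n => ((A n i : ℚ) : ℚ_[p]) - α 0 i * ((A n (m + 1) : ℚ) : ℚ_[p])
    with hWdef
  have hWini : ∀ j ∈ Finset.Icc 1 m, W (-(j : ℤ)) = if i = j then 1 else 0 := by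
    intro j hj
    have hj' := Finset.mem_Icc.1 hj
    have hjm : j ∈ Finset.Icc 1 (m + 1) := Finset.mem_Icc.2 ⟨hj'.1, by omega⟩
    simp only [hWdef]
    rw [hA0 i him j hjm, hA0 (m + 1) hmm j hjm, if_neg (show ¬ (m + 1 = j) by omega)]
    split_ifs <;> simp
  have hWlast : W (0 - m - 1) = - α 0 i := by
    have e : (0 - (m : ℤ) - 1) = -((m + 1 : ℕ) : ℤ) := by push_cast; ring
    simp only [hWdef]
    rw [e, hA0 i him _ hmm, hA0 _ hmm _ hmm, if_neg (show ¬ (i = m + 1) by omega)]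
    simp
  have hrec : ∀ n : ℕ, W n =
      (∑ j ∈ Finset.Icc 1 m, (a n j : ℚ_[p]) * W ((n : ℤ) - j)) + W ((n : ℤ) - m - 1) := by
    intro n
    simp only [hWdef]
    rw [hA n i him, hA n _ hmm]
    push_cast
    simp only [mul_sub, mul_add, Finset.sum_sub_distrib, Finset.mul_sum]
    have : ∑ j ∈ Finset.Icc 1 m, α 0 i * ((a n j : ℚ_[p]) * ((A ((n : ℤ) - j) (m + 1) : ℚ) : ℚ_[p]))
      = ∑ j ∈ Finset.Icc 1 m, (a n j : ℚ_[p]) * (α 0 i * ((A ((n : ℤ) - j) (m + 1) : ℚ) : ℚ_[p])) :=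
      Finset.sum_congr rfl fun j _ => by ring
    rw [this]
    ring
  have h0 : (∑ j ∈ Finset.Icc 1 m, α 0 j * W (0 - (j : ℤ))) + W (0 - m - 1) = 0 := by
    rw [hWlast, Finset.sum_congr rfl (g := fun j => if i = j then α 0 j else 0)]
    · rw [Finset.sum_ite_eq, if_pos hi]; ring
    · intro j hj
      rw [zero_sub, hWini j hj]
      split_ifs <;> simp
  have hid := jp_identity hm α a hrun W h0 hrec
  have hB := jp_bound (m := m) W (fun n j => (a n j : ℚ_[p]) - α n j)
    (fun n j hj => by
      have := ((hrun n).1 j hj).2.2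
      rw [norm_sub_rev] at this
      exact jp_norm_le this)
    (fun n => by
      have h := hid n
      rw [hrec n]
      simp only [sub_mul, Finset.sum_sub_distrib]
      linear_combination h)
    (fun j hj => by
      rw [hWini j hj]
      split_ifs <;> simp)
  have hlim : Filter.Tendsto (fun n : ℕ => ((p : ℝ)⁻¹) ^ (n / m)) Filter.atTop (nhds 0) := by
    have h1 : (p : ℝ)⁻¹ < 1 := inv_lt_one_of_one_lt₀ (by exact_mod_cast hp.out.one_lt)
    exact (tendsto_pow_atTop_nhds_zero_of_lt_one (by positivity) h1).comp
      (Nat.tendsto_div_const_atTop (by omega))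
  refine squeeze_zero (fun n => norm_nonneg _) (fun n => ?_) hlim
  rw [hV n (by omega) i hi]
  refine hB (n / m) n ?_
  have : n / m * m ≤ n := Nat.div_mul_le_self n m
  have h2 : ((n / m : ℕ) : ℤ) * m ≤ n := by exact_mod_cast this
  omega
end
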